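/- Let d ≥ 2, let Ω ⊂ ℝ^d be a nonempty bounded open set, and let F, a₀, a₁ be symmetric real d×d matrices with a₀ ≠ a₁ and a := a₁ − a₀. Then the infimum, taken over all v ∈ C_c^∞(Ω; ℝ^d), of ∫_Ω dist²(F + ∇^sym v(x), {a₀, a₁}) dx equals |Ω| · min_{θ ∈ [0,1]} ( ‖F − a_θ‖² + θ(1−θ)·min_{ξ ∈ S^{d−1}} ( ‖a‖² − 2‖aξ‖² + ⟨aξ, ξ⟩² ) ), where ∇^sym v(x) := (Dv(x) + Dv(x)ᵀ)/2 is the symmetrized Jacobian and |Ω| the Lebesgue measure of Ω. (Both the minimum over the unit sphere S^{d−1} and the minimum over θ ∈ [0,1] are attained.) -/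

import Mathlib

open MeasureTheory

/-- Squared Frobenius norm of a matrix. -/
def frob2 {d : ℕ} (M : Matrix (Fin d) (Fin d) ℝ) : ℝ := ∑ i, ∑ j, (M i j) ^ 2

/-- The symmetrized Jacobian of `v` at `x`, entry `(i,j)` is `(∂ⱼ vᵢ + ∂ᵢ vⱼ)/2`. -/
noncomputable def symJacobian {d : ℕ} (v : (Fin d → ℝ) → (Fin d → ℝ)) (x : Fin d → ℝ) :
    Matrix (Fin d) (Fin d) ℝ :=
  Matrix.of fun i j =>
    (fderiv ℝ v x (Pi.single j 1) i + fderiv ℝ v x (Pi.single i 1) j) / 2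

/-- The quartic form whose minimum over the sphere is `H`. -/
def hForm {d : ℕ} (a : Matrix (Fin d) (Fin d) ℝ) (ξ : Fin d → ℝ) : ℝ :=
  frob2 a - 2 * (∑ i, (a.mulVec ξ i) ^ 2) + (∑ i, a.mulVec ξ i * ξ i) ^ 2

lemma rankone_expand {d : ℕ} (a : Matrix (Fin d) (Fin d) ℝ) (ha : a.IsSymm)
    (p ξ : Fin d → ℝ) (hξ : ∑ i, ξ i ^ 2 = 1) (s : ℝ) :
    ∑ i, ∑ j, (p i * ξ j + p j * ξ i - s * a i j) ^ 2 =
      2 * (∑ i, p i ^ 2) + 2 * (∑ i, p i * ξ i) ^ 2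
        - 4 * s * (∑ i, p i * a.mulVec ξ i) + s ^ 2 * frob2 a := by
  have e1 : ∑ i, ∑ j, p i ^ 2 * ξ j ^ 2 = ∑ i, p i ^ 2 := by
    rw [← Finset.sum_mul_sum, hξ, mul_one]
  have e2 : ∑ i, ∑ j, p j ^ 2 * ξ i ^ 2 = ∑ i, p i ^ 2 := by
    rw [Finset.sum_comm, e1]
  have e3 : ∑ i, ∑ j, (p i * ξ i) * (p j * ξ j) = (∑ i, p i * ξ i) ^ 2 := by
    rw [← Finset.sum_mul_sum, sq]
  have e4 : ∑ i, ∑ j, p i * (a i j * ξ j) = ∑ i, p i * a.mulVec ξ i := by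
    refine Finset.sum_congr rfl fun i _ => ?_
    rw [← Finset.mul_sum]; rfl
  have e5 : ∑ i, ∑ j, p j * (a i j * ξ i) = ∑ i, p i * a.mulVec ξ i := by
    rw [Finset.sum_comm, ← e4]
    refine Finset.sum_congr rfl fun i _ => Finset.sum_congr rfl fun j _ => ?_
    rw [ha.apply]
  have : ∀ i j, (p i * ξ j + p j * ξ i - s * a i j) ^ 2 =
      p i ^ 2 * ξ j ^ 2 + p j ^ 2 * ξ i ^ 2 + 2 * ((p i * ξ i) * (p j * ξ j))
      - 2 * s * (p i * (a i j * ξ j)) - 2 * s * (p j * (a i j * ξ i)) + s ^ 2 * (a i j) ^ 2 := by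
    intro i j; ring
  have key : ∑ i, ∑ j, (p i * ξ j + p j * ξ i - s * a i j) ^ 2 =
      ∑ i, ∑ j, p i ^ 2 * ξ j ^ 2 + ∑ i, ∑ j, p j ^ 2 * ξ i ^ 2
      + 2 * ∑ i, ∑ j, (p i * ξ i) * (p j * ξ j) - 2 * s * ∑ i, ∑ j, p i * (a i j * ξ j)
      - 2 * s * ∑ i, ∑ j, p j * (a i j * ξ i) + s ^ 2 * ∑ i, ∑ j, (a i j) ^ 2 := by
    simp only [this, Finset.sum_add_distrib, Finset.sum_sub_distrib, Finset.mul_sum]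
  rw [key, e1, e2, e3, e4, e5, frob2]
  ring

lemma rankone_lower {d : ℕ} (a : Matrix (Fin d) (Fin d) ℝ) (ha : a.IsSymm)
    (p ξ : Fin d → ℝ) (hξ : ∑ i, ξ i ^ 2 = 1) (s : ℝ) :
    hForm a ξ * s ^ 2 ≤ ∑ i, ∑ j, (p i * ξ j + p j * ξ i - s * a i j) ^ 2 := by
  rw [rankone_expand a ha p ξ hξ s, hForm]
  set y := a.mulVec ξ with hy
  have e1 : ∑ i, (p i - s * y i) ^ 2 =
      ∑ i, p i ^ 2 - 2 * s * ∑ i, p i * y i + s ^ 2 * ∑ i, y i ^ 2 := by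
    simp only [Finset.mul_sum, ← Finset.sum_add_distrib, ← Finset.sum_sub_distrib]
    exact Finset.sum_congr rfl fun i _ => by ring
  have e2 : ∑ i, (p i - s * y i) * ξ i = ∑ i, p i * ξ i - s * ∑ i, y i * ξ i := by
    simp only [Finset.mul_sum, ← Finset.sum_sub_distrib]
    exact Finset.sum_congr rfl fun i _ => by ring
  have cs := Finset.sum_mul_sq_le_sq_mul_sq Finset.univ (fun i => p i - s * y i) ξ
  rw [hξ, e2, mul_one, e1] at cs
  nlinarith [sq_nonneg (2 * (∑ i, p i * ξ i - s * ∑ i, y i * ξ i) + s * ∑ i, y i * ξ i)]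

/-- The optimal amplitude `b / 2` for the direction `ξ`. -/
noncomputable def optP {d : ℕ} (a : Matrix (Fin d) (Fin d) ℝ) (ξ : Fin d → ℝ) (i : Fin d) : ℝ :=
  a.mulVec ξ i - (∑ i, a.mulVec ξ i * ξ i) / 2 * ξ i

lemma rankone_opt {d : ℕ} (a : Matrix (Fin d) (Fin d) ℝ) (ha : a.IsSymm)
    (ξ : Fin d → ℝ) (hξ : ∑ i, ξ i ^ 2 = 1) :
    ∑ i, ∑ j, (optP a ξ i * ξ j + optP a ξ j * ξ i - a i j) ^ 2 = hForm a ξ := by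
  have := rankone_expand a ha (optP a ξ) ξ hξ 1
  simp only [one_mul] at this
  rw [this, hForm]
  unfold optP
  set y := a.mulVec ξ with hy
  set c := ∑ i, y i * ξ i with hc
  have e1 : ∑ i, (y i - c / 2 * ξ i) ^ 2 = ∑ i, y i ^ 2 - c * c + (c / 2) ^ 2 * 1 := by
    rw [← hξ]
    conv_rhs => rw [hc]
    simp only [Finset.mul_sum, ← Finset.sum_add_distrib, ← Finset.sum_sub_distrib]
    rw [← hc]
    exact Finset.sum_congr rfl fun i _ => by ring
  have e2 : ∑ i, (y i - c / 2 * ξ i) * ξ i = c - c / 2 * 1 := by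
    rw [← hξ]
    conv_rhs => rw [hc]
    simp only [Finset.mul_sum, ← Finset.sum_sub_distrib]
    rw [← hc]
    exact Finset.sum_congr rfl fun i _ => by ring
  have e3 : ∑ i, (y i - c / 2 * ξ i) * y i = ∑ i, y i ^ 2 - c / 2 * c := by
    conv_rhs => rw [hc]
    simp only [Finset.mul_sum, ← Finset.sum_sub_distrib]
    rw [← hc]
    exact Finset.sum_congr rfl fun i _ => by ring
  rw [e1, e2, e3]
  ring

lemma hForm_isLeast {d : ℕ} (hd : 2 ≤ d) (a : Matrix (Fin d) (Fin d) ℝ) :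
    ∃ ξ : Fin d → ℝ, (∑ i, ξ i ^ 2) = 1 ∧
      ∀ η : Fin d → ℝ, (∑ i, η i ^ 2) = 1 → hForm a ξ ≤ hForm a η := by
  have hc : IsCompact {ξ : Fin d → ℝ | ∑ i, ξ i ^ 2 = 1} := by
    refine Metric.isCompact_of_isClosed_isBounded
      (isClosed_eq (by fun_prop) continuous_const) ?_
    refine (Metric.isBounded_closedBall (x := (0 : Fin d → ℝ)) (r := 1)).subset ?_
    intro ξ hξ
    rw [mem_closedBall_zero_iff, pi_norm_le_iff_of_nonneg zero_le_one]
    intro i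
    have : ξ i ^ 2 ≤ 1 := by
      rw [← (show ∑ i, ξ i ^ 2 = 1 from hξ)]
      exact Finset.single_le_sum (f := fun i => ξ i ^ 2) (fun i _ => sq_nonneg _)
        (Finset.mem_univ i)
    rw [Real.norm_eq_abs]
    exact (sq_le_one_iff_abs_le_one _).1 this
  have hne : {ξ : Fin d → ℝ | ∑ i, ξ i ^ 2 = 1}.Nonempty := by
    refine ⟨Pi.single ⟨0, by omega⟩ 1, ?_⟩
    simp [Pi.single_apply, ite_pow]
  have hcont : Continuous (hForm a) := by
    unfold hForm
    have : Continuous fun ξ : Fin d → ℝ => a.mulVec ξ :=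
      Continuous.matrix_mulVec continuous_const continuous_id
    fun_prop
  obtain ⟨ξ, hξ, hmin⟩ := hc.exists_isMinOn hne hcont.continuousOn
  exact ⟨ξ, hξ, fun η hη => hmin hη⟩

lemma hForm_nonneg {d : ℕ} (a : Matrix (Fin d) (Fin d) ℝ) (ha : a.IsSymm)
    (ξ : Fin d → ℝ) (hξ : ∑ i, ξ i ^ 2 = 1) : 0 ≤ hForm a ξ := by
  rw [← rankone_opt a ha ξ hξ]
  positivity

lemma rankone_lower' {d : ℕ} (hd : 2 ≤ d) (a : Matrix (Fin d) (Fin d) ℝ) (ha : a.IsSymm)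
    (H : ℝ) (hH : ∀ ξ : Fin d → ℝ, ∑ i, ξ i ^ 2 = 1 → H ≤ hForm a ξ)
    (p k : Fin d → ℝ) (s : ℝ) :
    H * s ^ 2 ≤ ∑ i, ∑ j, (p i * k j + p j * k i - s * a i j) ^ 2 := by
  by_cases hk : ∑ i, k i ^ 2 = 0
  · have hk0 : ∀ i, k i = 0 := by
      intro i
      have := (Finset.sum_eq_zero_iff_of_nonneg (fun i _ => sq_nonneg (k i))).1 hk i
        (Finset.mem_univ i)
      exact pow_eq_zero_iff (two_ne_zero) |>.1 this
    obtain ⟨ξ, hξ, -⟩ := hForm_isLeast hd a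
    have h1 := rankone_lower a ha 0 ξ hξ s
    have h2 := mul_le_mul_of_nonneg_right (hH ξ hξ) (sq_nonneg s)
    simp only [hk0, Pi.zero_apply, zero_mul, mul_zero] at h1 ⊢
    exact h2.trans h1
  · have hpos : 0 < ∑ i, k i ^ 2 :=
      lt_of_le_of_ne (Finset.sum_nonneg fun i _ => sq_nonneg _) (Ne.symm hk)
    set r := Real.sqrt (∑ i, k i ^ 2) with hr
    have hr0 : 0 < r := Real.sqrt_pos.2 hpos
    have hr2 : r ^ 2 = ∑ i, k i ^ 2 := Real.sq_sqrt hpos.le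
    have hξ : ∑ i, (k i / r) ^ 2 = 1 := by
      simp only [div_pow, ← Finset.sum_div]
      rw [← hr2]; field_simp
    have h1 := rankone_lower a ha (fun i => r * p i) (fun i => k i / r) hξ s
    have h2 := mul_le_mul_of_nonneg_right (hH _ hξ) (sq_nonneg s)
    refine h2.trans (h1.trans (le_of_eq ?_))
    refine Finset.sum_congr rfl fun i _ => Finset.sum_congr rfl fun j _ => ?_
    congr 2
    field_simp

lemma rankone_lower_complex {d : ℕ} (hd : 2 ≤ d) (a : Matrix (Fin d) (Fin d) ℝ) (ha : a.IsSymm)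
    (H : ℝ) (hH : ∀ ξ : Fin d → ℝ, ∑ i, ξ i ^ 2 = 1 → H ≤ hForm a ξ)
    (p : Fin d → ℂ) (k : Fin d → ℝ) (s : ℂ) :
    H * ‖s‖ ^ 2 ≤ ∑ i, ∑ j, ‖p i * (k j : ℂ) + p j * (k i : ℂ) - (a i j : ℂ) * s‖ ^ 2 := by
  have h1 := rankone_lower' hd a ha H hH (fun i => (p i).re) k s.re
  have h2 := rankone_lower' hd a ha H hH (fun i => (p i).im) k s.im
  have h3 : ∀ z : ℂ, ‖z‖ ^ 2 = z.re ^ 2 + z.im ^ 2 := by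
    intro z; rw [Complex.sq_norm, Complex.normSq_apply]; ring
  simp only [h3, mul_add, Finset.sum_add_distrib]
  refine add_le_add (h1.trans (le_of_eq ?_)) (h2.trans (le_of_eq ?_)) <;>
  · refine Finset.sum_congr rfl fun i _ => Finset.sum_congr rfl fun j _ => ?_
    simp
    ring

lemma L2_norm_sq {d : ℕ} (f : Lp ℂ 2 (volume : Measure (EuclideanSpace ℝ (Fin d)))) :
    ‖f‖ ^ 2 = ∫ x, ‖f x‖ ^ 2 := by
    have h := (L2.inner_def (𝕜 := ℂ) f f)
    rw [inner_self_eq_norm_sq_to_K] at h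
    simp only [inner_self_eq_norm_sq_to_K] at h
    have h2 : ∀ z : ℝ, (RCLike.ofReal z : ℂ) ^ 2 = ((z ^ 2 : ℝ) : ℂ) := by
      intro z; push_cast; rfl
    simp only [h2] at h
    rw [integral_complex_ofReal] at h
    exact_mod_cast h

open SchwartzMap FourierTransform LineDeriv in
lemma fourier_lower {d : ℕ} (hd : 2 ≤ d) (a : Matrix (Fin d) (Fin d) ℝ) (ha : a.IsSymm)
    (H : ℝ) (hH : ∀ ξ : Fin d → ℝ, ∑ i, ξ i ^ 2 = 1 → H ≤ hForm a ξ)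
    (V : Fin d → 𝓢(EuclideanSpace ℝ (Fin d), ℂ))
    (G : Lp ℂ 2 (volume : Measure (EuclideanSpace ℝ (Fin d)))) :
    H * ‖G‖ ^ 2 ≤ ∑ i, ∑ j, ‖((1 / 2 : ℂ) • (∂_{EuclideanSpace.single j (1 : ℝ)} (V i) +
      ∂_{EuclideanSpace.single i (1 : ℝ)} (V j))).toLp 2 volume - (a i j : ℂ) • G‖ ^ 2 := by
  have hsq := L2_norm_sq (d := d)
  have hint : ∀ f : Lp ℂ 2 (volume : Measure (EuclideanSpace ℝ (Fin d))),
      Integrable (fun x => ‖f x‖ ^ 2) := by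
    intro f
    have := (Lp.memLp f).integrable_norm_pow (by norm_num)
    simpa using this
  set S : Fin d → Fin d → 𝓢(EuclideanSpace ℝ (Fin d), ℂ) := fun i j =>
    ((1 / 2 : ℂ) • (∂_{EuclideanSpace.single j (1 : ℝ)} (V i) +
      ∂_{EuclideanSpace.single i (1 : ℝ)} (V j))) with hS
  have hF : ∀ i j, ‖(S i j).toLp 2 volume - (a i j : ℂ) • G‖ =
      ‖(𝓕 (S i j)).toLp 2 volume - (a i j : ℂ) • 𝓕 G‖ := by
    intro i j
    rw [← Lp.norm_fourier_eq]
    congr 1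
    rw [← SchwartzMap.toLp_fourier_eq]
    change Lp.fourierTransformₗᵢ _ _ _ = Lp.fourierTransformₗᵢ _ _ _ - _ • Lp.fourierTransformₗᵢ _ _ _
    rw [map_sub, map_smul]
  have hSk : ∀ i j k, (𝓕 (S i j)) k = (Real.pi * Complex.I * 𝓕 (V i) k) * ((k j : ℝ) : ℂ)
      + (Real.pi * Complex.I * 𝓕 (V j) k) * ((k i : ℝ) : ℂ) := by
    intro i j k
    have t : ∀ m : EuclideanSpace ℝ (Fin d), (inner ℝ · m).HasTemperateGrowth := by
      intro m; fun_prop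
    simp only [hS]
    rw [FourierTransform.fourier_smul, FourierTransform.fourier_add, fourier_lineDerivOp_eq, fourier_lineDerivOp_eq]
    simp [smulLeftCLM_apply_apply (t _)]
    rw [EuclideanSpace.inner_single_right, EuclideanSpace.inner_single_right]
    simp
    ring
  change H * ‖G‖ ^ 2 ≤ ∑ i, ∑ j, ‖(S i j).toLp 2 volume - (a i j : ℂ) • G‖ ^ 2
  simp only [hF]
  rw [← Lp.norm_fourier_eq G]
  simp only [hsq]
  rw [← integral_const_mul]
  have : ∑ i, ∑ j, ∫ x, ‖((𝓕 (S i j)).toLp 2 volume - (a i j : ℂ) • 𝓕 G) x‖ ^ 2 =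
      ∫ x, ∑ i, ∑ j, ‖((𝓕 (S i j)).toLp 2 volume - (a i j : ℂ) • 𝓕 G) x‖ ^ 2 := by
    rw [integral_finsetSum _ (fun i _ => integrable_finsetSum _ fun j _ => hint _)]
    refine Finset.sum_congr rfl fun i _ => ?_
    rw [integral_finsetSum _ (fun j _ => hint _)]
  rw [this]
  refine integral_mono_ae ((hint _).const_mul H)
    (integrable_finsetSum _ (fun i _ => integrable_finsetSum _ fun j _ => hint _)) ?_
  have hae : ∀ᵐ x, ∀ i j, ((𝓕 (S i j)).toLp 2 volume - (a i j : ℂ) • 𝓕 G) x =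
      𝓕 (S i j) x - (a i j : ℂ) * (𝓕 G) x := by
    rw [ae_all_iff]; intro i
    rw [ae_all_iff]; intro j
    filter_upwards [Lp.coeFn_sub ((𝓕 (S i j)).toLp 2 volume) ((a i j : ℂ) • 𝓕 G),
      Lp.coeFn_smul (a i j : ℂ) (𝓕 G), SchwartzMap.coeFn_toLp (𝓕 (S i j)) 2 volume] with x h1 h2 h3
    rw [h1, Pi.sub_apply, h2, h3]; rfl
  filter_upwards [hae] with x hx
  simp only [hx, hSk]
  exact rankone_lower_complex hd a ha H hH (fun i => Real.pi * Complex.I * 𝓕 (V i) x)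
    (fun i => x i) (𝓕 G x)

open SchwartzMap LineDeriv in
lemma real_lower {d : ℕ} (hd : 2 ≤ d) (a : Matrix (Fin d) (Fin d) ℝ) (ha : a.IsSymm)
    (H : ℝ) (hH : ∀ ξ : Fin d → ℝ, ∑ i, ξ i ^ 2 = 1 → H ≤ hForm a ξ)
    (v : (Fin d → ℝ) → (Fin d → ℝ)) (hv : ContDiff ℝ (⊤ : ℕ∞) v) (hvc : HasCompactSupport v)
    (f : (Fin d → ℝ) → ℝ) (hf : MemLp f 2 volume) :
    H * ∫ x, f x ^ 2 ≤ ∑ i, ∑ j, ∫ x, (symJacobian v x i j - f x * a i j) ^ 2 := by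
  let e : EuclideanSpace ℝ (Fin d) ≃L[ℝ] (Fin d → ℝ) := EuclideanSpace.equiv (Fin d) ℝ
  have mp : MeasurePreserving (e : EuclideanSpace ℝ (Fin d) → (Fin d → ℝ)) volume volume :=
    PiLp.volume_preserving_ofLp (Fin d)
  have hemb : MeasurableEmbedding (e : EuclideanSpace ℝ (Fin d) → (Fin d → ℝ)) :=
    e.toHomeomorph.measurableEmbedding
  let L : Fin d → ((Fin d → ℝ) →L[ℝ] ℂ) := fun i =>
    Complex.ofRealCLM.comp (ContinuousLinearMap.proj i)
  have hW : ∀ i, ContDiff ℝ (⊤ : ℕ∞) (fun x => L i (v (e x))) := fun i =>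
    (L i).contDiff.comp (hv.comp e.contDiff)
  have hWc : ∀ i, HasCompactSupport (fun x => L i (v (e x))) := by
    intro i
    have h1 : HasCompactSupport (v ∘ e) := hvc.comp_homeomorph e.toHomeomorph
    exact h1.comp_left (g := L i) (map_zero _)
  let V : Fin d → 𝓢(EuclideanSpace ℝ (Fin d), ℂ) := fun i => (hWc i).toSchwartzMap (hW i)
  have hder : ∀ i j x, (∂_{EuclideanSpace.single j (1 : ℝ)} (V i)) x =
      ((fderiv ℝ v (e x) (Pi.single j 1) i : ℝ) : ℂ) := by
    intro i j x
    rw [lineDerivOp_apply_eq_fderiv]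
    have h1 : HasFDerivAt (fun x => L i (v (e x)))
        ((L i).comp ((fderiv ℝ v (e x)).comp (e : EuclideanSpace ℝ (Fin d) →L[ℝ] (Fin d → ℝ)))) x :=
      (L i).hasFDerivAt.comp x
        (((hv.differentiable (by simp)) (e x)).hasFDerivAt.comp x e.hasFDerivAt)
    have h2 : fderiv ℝ (V i) x = _ := h1.fderiv
    rw [h2]
    rfl
  have hfE : MemLp (fun x => ((f (e x) : ℝ) : ℂ)) 2
      (volume : Measure (EuclideanSpace ℝ (Fin d))) :=
    (hf.comp_measurePreserving mp).ofReal
  have key := fourier_lower hd a ha H hH V hfE.toLp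
  have hG : ‖hfE.toLp‖ ^ 2 = ∫ x, f x ^ 2 := by
    rw [L2_norm_sq, ← mp.integral_comp hemb]
    refine integral_congr_ae ?_
    filter_upwards [hfE.coeFn_toLp] with x hx
    rw [hx]; simp
  rw [hG] at key
  refine key.trans (le_of_eq ?_)
  refine Finset.sum_congr rfl fun i _ => Finset.sum_congr rfl fun j _ => ?_
  rw [L2_norm_sq, ← mp.integral_comp hemb]
  refine integral_congr_ae ?_
  set S := ((1 / 2 : ℂ) • (∂_{EuclideanSpace.single j (1 : ℝ)} (V i) +
      ∂_{EuclideanSpace.single i (1 : ℝ)} (V j))) with hS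
  filter_upwards [hfE.coeFn_toLp, Lp.coeFn_sub (S.toLp 2 volume) ((a i j : ℂ) • hfE.toLp),
      Lp.coeFn_smul (a i j : ℂ) hfE.toLp, SchwartzMap.coeFn_toLp S 2 volume] with x h0 h1 h2 h3
  rw [h1, Pi.sub_apply, h2, h3, Pi.smul_apply, h0]
  have : S x - (a i j : ℂ) • ((f (e x) : ℝ) : ℂ) =
      ((symJacobian v (e x) i j - f (e x) * a i j : ℝ) : ℂ) := by
    have : S x = (1 / 2 : ℂ) * ((∂_{EuclideanSpace.single j (1 : ℝ)} (V i)) x +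
      (∂_{EuclideanSpace.single i (1 : ℝ)} (V j)) x) := rfl
    rw [this, hder, hder]
    simp [symJacobian]
    ring
  rw [this, Complex.norm_real, Real.norm_eq_abs, sq_abs]

lemma integral_fderiv_zero {d : ℕ} (g : (Fin d → ℝ) → ℝ) (hg : ContDiff ℝ (⊤ : ℕ∞) g)
    (hgc : HasCompactSupport g) (w : Fin d → ℝ) : ∫ x, fderiv ℝ g x w = 0 := by
  have hc : Continuous fun x => fderiv ℝ g x w :=
    (hg.continuous_fderiv (by simp)).clm_apply continuous_const
  have hcs : HasCompactSupport fun x => fderiv ℝ g x w := hgc.fderiv_apply ℝ w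
  have h := integral_mul_fderiv_eq_neg_fderiv_mul_of_integrable (μ := volume)
    (f := fun _ : Fin d → ℝ => (1 : ℝ)) (g := g) (v := w) (by simp)
    (by simpa using hc.integrable_of_hasCompactSupport hcs)
    (by simpa using hg.continuous.integrable_of_hasCompactSupport hgc)
    (fun x _ => differentiableAt_const _)
    (fun x _ => hg.differentiable (by simp) x)
  simpa using h


lemma sj_entry_fderiv {d : ℕ} (v : (Fin d → ℝ) → (Fin d → ℝ)) (hv : ContDiff ℝ (⊤ : ℕ∞) v)
    (x w : Fin d → ℝ) (i : Fin d) :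
    fderiv ℝ v x w i = fderiv ℝ (fun x => v x i) x w := by
  have h : HasFDerivAt (fun x => v x i)
      ((ContinuousLinearMap.proj (R := ℝ) (φ := fun _ : Fin d => ℝ) i).comp (fderiv ℝ v x)) x :=
    (ContinuousLinearMap.proj (R := ℝ) (φ := fun _ : Fin d => ℝ) i).hasFDerivAt.comp x
      (hv.differentiable (by simp) x).hasFDerivAt
  rw [h.fderiv]; rfl

lemma sj_continuous {d : ℕ} (v : (Fin d → ℝ) → (Fin d → ℝ)) (hv : ContDiff ℝ (⊤ : ℕ∞) v)
    (i j : Fin d) : Continuous fun x => symJacobian v x i j := by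
  have h1 : ∀ w, Continuous fun x => fderiv ℝ v x w := fun w =>
    (hv.continuous_fderiv (by simp)).clm_apply continuous_const
  have h2 : ∀ w i, Continuous fun x => fderiv ℝ v x w i := fun w i =>
    (continuous_apply i).comp (h1 w)
  exact ((h2 _ _).add (h2 _ _)).div_const 2

lemma sj_eq_zero {d : ℕ} (v : (Fin d → ℝ) → (Fin d → ℝ)) (x : Fin d → ℝ) (hx : x ∉ tsupport v)
    (i j : Fin d) : symJacobian v x i j = 0 := by
  have : fderiv ℝ v x = 0 := by
    by_contra h
    exact hx (support_fderiv_subset ℝ h)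
  simp [symJacobian, this]

lemma sj_compact {d : ℕ} (v : (Fin d → ℝ) → (Fin d → ℝ)) (hvc : HasCompactSupport v)
    (i j : Fin d) : HasCompactSupport fun x => symJacobian v x i j :=
  HasCompactSupport.intro hvc fun x hx => sj_eq_zero v x hx i j

lemma sj_integral {d : ℕ} (v : (Fin d → ℝ) → (Fin d → ℝ)) (hv : ContDiff ℝ (⊤ : ℕ∞) v)
    (hvc : HasCompactSupport v) (i j : Fin d) : ∫ x, symJacobian v x i j = 0 := by
  have hs : ∀ i, ContDiff ℝ (⊤ : ℕ∞) fun x => v x i := fun i => contDiff_pi.1 hv i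
  have hsc : ∀ i, HasCompactSupport fun x => v x i := fun i =>
    hvc.comp_left (g := fun y : Fin d → ℝ => y i) rfl
  have hI : ∀ i w, Integrable fun x => fderiv ℝ (fun x => v x i) x w := fun i w =>
    (((hs i).continuous_fderiv (by simp)).clm_apply
      continuous_const).integrable_of_hasCompactSupport ((hsc i).fderiv_apply ℝ w)
  simp only [symJacobian, Matrix.of_apply, sj_entry_fderiv v hv]
  rw [integral_div, integral_add (hI _ _) (hI _ _), integral_fderiv_zero _ (hs _) (hsc _),
    integral_fderiv_zero _ (hs _) (hsc _)]
  simp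

lemma energy_lower {d : ℕ} (hd : 2 ≤ d)
    (Ω : Set (Fin d → ℝ)) (hΩopen : IsOpen Ω) (hΩne : Ω.Nonempty)
    (hΩbdd : Bornology.IsBounded Ω)
    (F a₀ a₁ : Matrix (Fin d) (Fin d) ℝ) (ha : (a₁ - a₀).IsSymm) (H M : ℝ)
    (hH : ∀ ξ : Fin d → ℝ, ∑ i, ξ i ^ 2 = 1 → H ≤ hForm (a₁ - a₀) ξ)
    (hM : ∀ θ ∈ Set.Icc (0 : ℝ) 1,
        M ≤ frob2 (F - ((1 - θ) • a₀ + θ • a₁)) + θ * (1 - θ) * H)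
    (v : (Fin d → ℝ) → (Fin d → ℝ)) (hv : ContDiff ℝ (⊤ : ℕ∞) v) (hvc : HasCompactSupport v)
    (hvΩ : tsupport v ⊆ Ω) :
    (volume Ω).toReal * M ≤ ∫ x in Ω,
            min (frob2 (F + symJacobian v x - a₀)) (frob2 (F + symJacobian v x - a₁)) := by
  have hΩfin : volume Ω ≠ ⊤ := hΩbdd.measure_lt_top.ne
  have hΩpos : 0 < (volume Ω).toReal :=
    ENNReal.toReal_pos (hΩopen.measure_pos volume hΩne).ne' hΩfin
  have hcf : ∀ b : Matrix (Fin d) (Fin d) ℝ,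
      Continuous fun x => frob2 (F + symJacobian v x - b) := by
    intro b
    unfold frob2
    refine continuous_finsetSum _ fun i _ => continuous_finsetSum _ fun j _ => ?_
    exact ((continuous_const.add (sj_continuous v hv i j)).sub continuous_const).pow 2
  set S : Set (Fin d → ℝ) := Ω ∩ {x | frob2 (F + symJacobian v x - a₁) <
    frob2 (F + symJacobian v x - a₀)} with hS
  have hSm : MeasurableSet S :=
    (hΩopen.inter (isOpen_lt (hcf a₁) (hcf a₀))).measurableSet
  have hSfin : volume S ≠ ⊤ := measure_ne_top_of_subset Set.inter_subset_left hΩfin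
  have hSle : (volume S).toReal ≤ (volume Ω).toReal :=
    ENNReal.toReal_mono hΩfin (measure_mono Set.inter_subset_left)
  set m := (volume Ω).toReal with hm
  set θ := (volume S).toReal / m with hθ
  have hθm : (volume S).toReal = θ * m := by rw [hθ]; field_simp
  have hθ01 : θ ∈ Set.Icc (0 : ℝ) 1 :=
    ⟨div_nonneg ENNReal.toReal_nonneg hΩpos.le, (div_le_one hΩpos).2 hSle⟩
  set f : (Fin d → ℝ) → ℝ := fun x =>
    S.indicator (fun _ => (1 : ℝ)) x - Ω.indicator (fun _ => θ) x with hf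
  have hfL : ∀ p, MemLp f p volume := fun p =>
    (memLp_indicator_const p hSm 1 (Or.inr hSfin)).sub
      (memLp_indicator_const p hΩopen.measurableSet θ (Or.inr hΩfin))
  have hf0 : ∀ x ∉ Ω, f x = 0 := by
    intro x hx
    have : x ∉ S := fun h => hx h.1
    simp [hf, hx, this]
  have hfi : Integrable f := memLp_one_iff_integrable.1 (hfL 1)
  have hiS : Integrable (S.indicator (fun _ => (1 : ℝ))) :=
    (integrable_indicator_iff hSm).2 (integrableOn_const hSfin)
  have hiΩ : ∀ c : ℝ, Integrable (Ω.indicator (fun _ => c)) := fun c =>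
    (integrable_indicator_iff hΩopen.measurableSet).2 (integrableOn_const hΩfin)
  have hIS : ∫ x, S.indicator (fun _ => (1 : ℝ)) x = θ * m := by
    rw [integral_indicator hSm, setIntegral_const, ← hθm]; simp [Measure.real]
  have hIΩ : ∀ c : ℝ, ∫ x, Ω.indicator (fun _ => c) x = m * c := by
    intro c
    rw [integral_indicator hΩopen.measurableSet, setIntegral_const]; simp [Measure.real, hm]
  have hfint : ∫ x, f x = 0 := by
    rw [hf, integral_sub hiS (hiΩ θ), hIS, hIΩ]; ring
  have hf2 : ∫ x, f x ^ 2 = m * (θ * (1 - θ)) := by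
    have : ∀ x, f x ^ 2 = (1 - 2 * θ) * S.indicator (fun _ => (1 : ℝ)) x
        + Ω.indicator (fun _ => θ ^ 2) x := by
      intro x
      by_cases hx : x ∈ Ω
      · by_cases hxS : x ∈ S
        · simp [hf, hx, hxS]; ring
        · simp [hf, hx, hxS]
      · have : x ∉ S := fun h => hx h.1
        simp [hf, hx, this]
    simp only [this]
    rw [integral_add (hiS.const_mul _) (hiΩ _), integral_const_mul, hIS, hIΩ]
    ring
  set a := a₁ - a₀ with haa
  set D : Matrix (Fin d) (Fin d) ℝ := F - ((1 - θ) • a₀ + θ • a₁) with hD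
  set r : Fin d → Fin d → (Fin d → ℝ) → ℝ := fun i j x => symJacobian v x i j - f x * a i j with hr
  have heL : ∀ i j p, MemLp (fun x => symJacobian v x i j) p volume := fun i j p =>
    (sj_continuous v hv i j).memLp_of_hasCompactSupport (sj_compact v hvc i j)
  have hrL : ∀ i j p, MemLp (r i j) p volume := fun i j p =>
    (heL i j p).sub ((hfL p).mul_const _)
  have hri : ∀ i j, Integrable (r i j) := fun i j => memLp_one_iff_integrable.1 (hrL i j 1)
  have hr2 : ∀ i j, Integrable (fun x => r i j x ^ 2) := fun i j => (hrL i j 2).integrable_sq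
  have hr0 : ∀ i j, ∀ x ∉ Ω, r i j x = 0 := by
    intro i j x hx
    simp only [hr]
    rw [hf0 x hx, sj_eq_zero v x (fun h => hx (hvΩ h))]; simp
  have hrint : ∀ i j, ∫ x in Ω, r i j x = 0 := by
    intro i j
    rw [setIntegral_eq_integral_of_forall_compl_eq_zero (hr0 i j)]
    simp only [hr]
    rw [integral_sub (memLp_one_iff_integrable.1 (heL i j 1)) (hfi.mul_const _),
      integral_mul_const, hfint, sj_integral v hv hvc]; simp
  have hpt : ∀ x ∈ Ω, min (frob2 (F + symJacobian v x - a₀)) (frob2 (F + symJacobian v x - a₁))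
      = ∑ i, ∑ j, (D i j ^ 2 + 2 * D i j * r i j x + r i j x ^ 2) := by
    intro x hx
    by_cases hxS : x ∈ S
    · rw [min_eq_right (le_of_lt hxS.2)]
      unfold frob2
      refine Finset.sum_congr rfl fun i _ => Finset.sum_congr rfl fun j _ => ?_
      simp [hD, hr, hf, hx, hxS, haa]
      ring
    · have : ¬ (frob2 (F + symJacobian v x - a₁) < frob2 (F + symJacobian v x - a₀)) :=
        fun h => hxS ⟨hx, h⟩
      rw [min_eq_left (not_lt.1 this)]
      unfold frob2
      refine Finset.sum_congr rfl fun i _ => Finset.sum_congr rfl fun j _ => ?_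
      simp [hD, hr, hf, hx, hxS, haa]
      ring
  have hterm : ∀ i j, IntegrableOn
      (fun x => D i j ^ 2 + 2 * D i j * r i j x + r i j x ^ 2) Ω := fun i j =>
    ((integrableOn_const hΩfin).add ((hri i j).const_mul _).integrableOn).add
      (hr2 i j).integrableOn
  have hval : ∀ i j, ∫ x in Ω, (D i j ^ 2 + 2 * D i j * r i j x + r i j x ^ 2) =
      m * D i j ^ 2 + ∫ x, r i j x ^ 2 := by
    intro i j
    have i1 : IntegrableOn (fun _ => D i j ^ 2) Ω := integrableOn_const hΩfin
    have i2 : IntegrableOn (fun x => 2 * D i j * r i j x) Ω :=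
      ((hri i j).const_mul _).integrableOn
    have i12 : IntegrableOn (fun x => D i j ^ 2 + 2 * D i j * r i j x) Ω := i1.add i2
    rw [integral_add i12 (hr2 i j).integrableOn, integral_add i1 i2, integral_const_mul, hrint,
      setIntegral_const,
      setIntegral_eq_integral_of_forall_compl_eq_zero (f := fun x => r i j x ^ 2)
        (fun x hx => by simp [hr0 i j x hx])]
    simp [Measure.real, hm]
  rw [setIntegral_congr_fun hΩopen.measurableSet hpt,
    integral_finsetSum _ (fun i _ => integrable_finsetSum _ fun j _ => hterm i j)]
  have hsum : ∑ i, ∫ x in Ω, ∑ j, (D i j ^ 2 + 2 * D i j * r i j x + r i j x ^ 2) =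
      m * frob2 D + ∑ i, ∑ j, ∫ x, r i j x ^ 2 := by
    rw [frob2, Finset.mul_sum, ← Finset.sum_add_distrib]
    refine Finset.sum_congr rfl fun i _ => ?_
    rw [integral_finsetSum _ (fun j _ => hterm i j), Finset.mul_sum, ← Finset.sum_add_distrib]
    exact Finset.sum_congr rfl fun j _ => hval i j
  rw [hsum]
  have hlow := real_lower hd a ha H hH v hv hvc f (hfL 2)
  rw [hf2] at hlow
  have h1 := mul_le_mul_of_nonneg_left (hM θ hθ01) hΩpos.le
  calc m * M ≤ m * (frob2 D + θ * (1 - θ) * H) := h1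
    _ = m * frob2 D + H * (m * (θ * (1 - θ))) := by ring
    _ ≤ _ := by gcongr

open Real Filter Topology in
lemma profile_exists (θ : ℝ) (hθ : θ ∈ Set.Icc (0 : ℝ) 1) :
    ∃ u : ℕ → ℝ → ℝ, (∀ k, ContDiff ℝ (⊤ : ℕ∞) (u k) ∧ Function.Periodic (u k) (2 * π) ∧
      (∫ t in (-π)..π, u k t) = 0 ∧ ∀ t, |u k t| ≤ 1) ∧
      ∀ ψ : ℝ → ℝ, Continuous ψ → Tendsto (fun k => ∫ t in (-π)..π, ψ (u k t)) atTop
        (𝓝 (2 * π * (θ * ψ (1 - θ) + (1 - θ) * ψ (-θ)))) := by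
  obtain ⟨h0, h1⟩ := hθ
  have hpi := Real.pi_pos
  set q : ℕ → ℝ → ℝ := fun k t => Real.smoothTransition (k * (cos t - cos (π * θ))) with hq
  have hqs : ∀ k, ContDiff ℝ (⊤ : ℕ∞) (q k) := fun k =>
    Real.smoothTransition.contDiff.comp
      (contDiff_const.mul (Real.contDiff_cos.sub contDiff_const))
  have hqp : ∀ k, Function.Periodic (q k) (2 * π) := by
    intro k t; simp [hq, Real.cos_add_two_pi]
  have hq0 : ∀ k t, 0 ≤ q k t := fun k t => Real.smoothTransition.nonneg _
  have hq1 : ∀ k t, q k t ≤ 1 := fun k t => Real.smoothTransition.le_one _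
  set A : Set ℝ := Set.Ioo (-(π * θ)) (π * θ) with hA
  have hlim : ∀ t ∈ Set.Ioc (-π) π,
      Tendsto (fun k => q k t) atTop (𝓝 (A.indicator (fun _ => (1 : ℝ)) t)) := by
    intro t ht
    have habs : |t| ≤ π := abs_le.2 ⟨ht.1.le, ht.2⟩
    have hm : π * θ ≤ π := by nlinarith
    have hm0 : 0 ≤ π * θ := by positivity
    by_cases htA : t ∈ A
    · rw [Set.indicator_of_mem htA]
      have hlt : |t| < π * θ := abs_lt.2 htA
      have hc : cos (π * θ) < cos t := by
        rw [← Real.cos_abs t]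
        exact Real.strictAntiOn_cos ⟨abs_nonneg _, habs⟩ ⟨hm0, hm⟩ hlt
      have hev : ∀ᶠ k : ℕ in atTop, 1 ≤ (k : ℝ) * (cos t - cos (π * θ)) :=
        (tendsto_natCast_atTop_atTop.atTop_mul_const (sub_pos.2 hc)).eventually_ge_atTop 1
      refine tendsto_const_nhds.congr' ?_
      filter_upwards [hev] with k hk
      exact (Real.smoothTransition.one_of_one_le hk).symm
    · rw [Set.indicator_of_notMem htA]
      have hge : π * θ ≤ |t| := by
        by_contra h
        exact htA (abs_lt.1 (not_le.1 h))
      have hc : cos t ≤ cos (π * θ) := by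
        rw [← Real.cos_abs t]
        exact Real.strictAntiOn_cos.antitoneOn ⟨hm0, hm⟩ ⟨abs_nonneg _, habs⟩ hge
      refine tendsto_const_nhds.congr ?_
      intro k
      exact (Real.smoothTransition.zero_of_nonpos
        (mul_nonpos_of_nonneg_of_nonpos k.cast_nonneg (sub_nonpos.2 hc))).symm
  have hint : ∀ c : ℝ, ∫ t in (-π)..π, A.indicator (fun _ => c) t = 2 * π * θ * c := by
    intro c
    have hm : π * θ ≤ π := by nlinarith
    rw [intervalIntegral.integral_of_le (by linarith), setIntegral_indicator measurableSet_Ioo]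
    have : Set.Ioc (-π) π ∩ A = A := by
      apply Set.inter_eq_right.2
      intro t ht
      exact ⟨by linarith [ht.1], by linarith [ht.2]⟩
    rw [this, setIntegral_const, Measure.real, hA, Real.volume_Ioo,
      ENNReal.toReal_ofReal (by nlinarith), smul_eq_mul]
    ring
  set mean : ℕ → ℝ := fun k => (2 * π)⁻¹ * ∫ t in (-π)..π, q k t with hmean
  have hmlim : Tendsto mean atTop (𝓝 θ) := by
    have h := intervalIntegral.tendsto_integral_filter_of_dominated_convergence
      (μ := volume) (a := -π) (b := π) (l := atTop) (F := q)
      (f := A.indicator (fun _ => (1 : ℝ))) (fun _ => (1 : ℝ))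
      (Eventually.of_forall fun k => (hqs k).continuous.aestronglyMeasurable)
      (Eventually.of_forall fun k => Eventually.of_forall fun t _ => by
        rw [Real.norm_eq_abs, abs_of_nonneg (hq0 k t)]; exact hq1 k t)
      intervalIntegrable_const
      (Eventually.of_forall fun t ht => hlim t (by
        rwa [Set.uIoc_of_le (by linarith)] at ht))
    rw [hint] at h
    have h' := h.const_mul ((2 * π)⁻¹)
    have e : (2 * π)⁻¹ * (2 * π * θ * 1) = θ := by field_simp
    rwa [e] at h'
  have hqi : ∀ k, IntervalIntegrable (q k) volume (-π) π := fun k =>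
    (hqs k).continuous.intervalIntegrable _ _
  have hm0 : ∀ k, 0 ≤ mean k := fun k =>
    mul_nonneg (by positivity) (intervalIntegral.integral_nonneg (by linarith) fun t _ => hq0 k t)
  have hm1 : ∀ k, mean k ≤ 1 := by
    intro k
    have h := intervalIntegral.integral_mono_on (by linarith : -π ≤ π) (hqi k)
      (intervalIntegrable_const (c := (1 : ℝ))) (fun t _ => hq1 k t)
    rw [intervalIntegral.integral_const, smul_eq_mul] at h
    calc mean k ≤ (2 * π)⁻¹ * ((π - -π) * 1) := by
          simp only [hmean]; gcongr
      _ = 1 := by field_simp; ring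
  have hub : ∀ k t, |q k t - mean k| ≤ 1 := fun k t =>
    abs_le.2 ⟨by linarith [hq0 k t, hm1 k], by linarith [hq1 k t, hm0 k]⟩
  refine ⟨fun k t => q k t - mean k, fun k => ⟨(hqs k).sub contDiff_const, ?_, ?_, hub k⟩, ?_⟩
  · intro t; simp only [hqp k t]
  · rw [intervalIntegral.integral_sub (hqi k) intervalIntegrable_const,
      intervalIntegral.integral_const, smul_eq_mul]
    simp only [hmean]
    field_simp; ring
  · intro ψ hψ
    obtain ⟨C, hC⟩ := isCompact_Icc.exists_bound_of_continuousOn (s := Set.Icc (-1 : ℝ) 1)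
      hψ.continuousOn
    have h := intervalIntegral.tendsto_integral_filter_of_dominated_convergence
      (μ := volume) (a := -π) (b := π) (l := atTop) (F := fun k t => ψ (q k t - mean k))
      (f := fun t => ψ (A.indicator (fun _ => (1 : ℝ)) t - θ)) (fun _ => C)
      (Eventually.of_forall fun k =>
        (hψ.comp ((hqs k).continuous.sub continuous_const)).aestronglyMeasurable)
      (Eventually.of_forall fun k => Eventually.of_forall fun t _ =>
        hC _ (abs_le.1 (hub k t)))
      intervalIntegrable_const
      (Eventually.of_forall fun t ht => (hψ.tendsto _).comp ((hlim t (by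
        rwa [Set.uIoc_of_le (by linarith)] at ht)).sub hmlim))
    have e : ∀ t, ψ (A.indicator (fun _ => (1 : ℝ)) t - θ) =
        A.indicator (fun _ => ψ (1 - θ) - ψ (-θ)) t + ψ (-θ) := by
      intro t
      by_cases ht : t ∈ A <;> simp [ht]
    simp only [e] at h
    rw [intervalIntegral.integral_add _ intervalIntegrable_const, hint,
      intervalIntegral.integral_const, smul_eq_mul] at h
    · convert h using 2
      ring
    · rw [intervalIntegrable_iff]
      exact (integrableOn_const (by
        rw [Set.uIoc_of_le (by linarith), Real.volume_Ioc]; simp)).indicator measurableSet_Ioo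

open Real in
lemma primitive_exists (u : ℝ → ℝ) (hu : ContDiff ℝ (⊤ : ℕ∞) u)
    (hp : Function.Periodic u (2 * π)) (h0 : ∫ t in (-π)..π, u t = 0) :
    ∃ w : ℝ → ℝ, ContDiff ℝ (⊤ : ℕ∞) w ∧ (∀ t, HasDerivAt w (u t) t) ∧ ∃ W, ∀ t, |w t| ≤ W := by
  have hd : ∀ t, HasDerivAt (fun t => ∫ s in (0 : ℝ)..t, u s) (u t) t := fun t =>
    intervalIntegral.integral_hasDerivAt_right (hu.continuous.intervalIntegrable _ _)
      (hu.continuous.stronglyMeasurableAtFilter _ _) hu.continuous.continuousAt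
  have hder : deriv (fun t => ∫ s in (0 : ℝ)..t, u s) = u := funext fun t => (hd t).deriv
  have hc : ContDiff ℝ (⊤ : ℕ∞) (fun t => ∫ s in (0 : ℝ)..t, u s) := by
    rw [contDiff_infty_iff_deriv]
    exact ⟨fun t => (hd t).differentiableAt, by rw [hder]; exact hu⟩
  have hper : Function.Periodic (fun t => ∫ s in (0 : ℝ)..t, u s) (2 * π) := by
    intro t
    have h1 := intervalIntegral.integral_add_adjacent_intervals
      (hu.continuous.intervalIntegrable (μ := volume) 0 t)
      (hu.continuous.intervalIntegrable (μ := volume) t (t + 2 * π))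
    have h2 := hp.intervalIntegral_add_eq t (-π)
    have e : -π + 2 * π = π := by ring
    rw [e, h0] at h2
    simp only
    rw [← h1, h2, add_zero]
  refine ⟨_, hc, hd, ?_⟩
  obtain ⟨W, hW⟩ := isCompact_Icc.exists_bound_of_continuousOn (s := Set.Icc (0 : ℝ) (0 + 2 * π))
      hc.continuous.continuousOn
  refine ⟨W, fun t => ?_⟩
  obtain ⟨y, hy, hty⟩ := hper.exists_mem_Ico (by positivity) t 0
  rw [hty]
  exact hW y ⟨hy.1, hy.2.le⟩

/-- The oscillating test field. -/
noncomputable def lamField {d : ℕ} (φ : (Fin d → ℝ) → ℝ) (w : ℝ → ℝ) (n : ℝ) (ξ p : Fin d → ℝ)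
    (t : ℝ) (x : Fin d → ℝ) : Fin d → ℝ :=
  (φ x * (n⁻¹ * w (n * (∑ i, ξ i * x i) + t))) • (fun i => 2 * p i)

lemma lamField_contDiff {d : ℕ} (φ : (Fin d → ℝ) → ℝ) (hφ : ContDiff ℝ (⊤ : ℕ∞) φ)
    (w : ℝ → ℝ) (hw : ContDiff ℝ (⊤ : ℕ∞) w) (n : ℝ) (ξ p : Fin d → ℝ) (t : ℝ) :
    ContDiff ℝ (⊤ : ℕ∞) (lamField φ w n ξ p t) := by
  unfold lamField
  refine ContDiff.smul (hφ.mul (contDiff_const.mul (hw.comp ?_))) contDiff_const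
  fun_prop

lemma lamField_symJacobian {d : ℕ} (φ : (Fin d → ℝ) → ℝ) (hφ : ContDiff ℝ (⊤ : ℕ∞) φ)
    (w u : ℝ → ℝ) (hw : ∀ t, HasDerivAt w (u t) t) (n : ℝ) (hn : 0 < n) (ξ p : Fin d → ℝ) (t : ℝ)
    (x : Fin d → ℝ) (i j : Fin d) :
    symJacobian (lamField φ w n ξ p t) x i j =
      φ x * u (n * (∑ i, ξ i * x i) + t) * (p i * ξ j + p j * ξ i)
      + (n⁻¹ * w (n * (∑ i, ξ i * x i) + t)) *
        (fderiv ℝ φ x (Pi.single j 1) * p i + fderiv ℝ φ x (Pi.single i 1) * p j) := by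
  let l : (Fin d → ℝ) →L[ℝ] ℝ :=
    ∑ i, ξ i • ContinuousLinearMap.proj (R := ℝ) (φ := fun _ : Fin d => ℝ) i
  have hl : ∀ y, l y = ∑ i, ξ i * y i := by
    intro y; simp [l]
  have hlj : ∀ j, l (Pi.single j 1) = ξ j := by
    intro j; rw [hl]; simp [Pi.single_apply]
  set z := n * (∑ i, ξ i * x i) + t with hz
  have h1 : HasFDerivAt (fun x : Fin d → ℝ => n * (∑ i, ξ i * x i) + t) (n • l) x := by
    have : HasFDerivAt (fun x : Fin d → ℝ => n * l x + t) (n • l) x :=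
      (l.hasFDerivAt.const_mul n).add_const t
    simpa only [hl] using this
  have h2 : HasFDerivAt (fun x : Fin d → ℝ => w (n * (∑ i, ξ i * x i) + t)) (u z • (n • l)) x :=
    (hw z).comp_hasFDerivAt x h1
  have h3 : HasFDerivAt (fun x : Fin d → ℝ => φ x * (n⁻¹ * w (n * (∑ i, ξ i * x i) + t)))
      (φ x • (n⁻¹ • (u z • (n • l))) + (n⁻¹ * w z) • fderiv ℝ φ x) x :=
    (hφ.differentiable (by simp) x).hasFDerivAt.mul (h2.const_mul n⁻¹)
  have h4 := h3.smul_const (fun i => 2 * p i)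
  have h5 : fderiv ℝ (lamField φ w n ξ p t) x = _ := h4.fderiv
  simp only [symJacobian, Matrix.of_apply]
  rw [h5]
  simp [hlj]
  field_simp
  ring

lemma cutoff_exists {d : ℕ} (Ω K : Set (Fin d → ℝ)) (hΩ : IsOpen Ω) (hK : IsCompact K)
    (hKΩ : K ⊆ Ω) :
    ∃ φ : (Fin d → ℝ) → ℝ, ContDiff ℝ (⊤ : ℕ∞) φ ∧ HasCompactSupport φ ∧ tsupport φ ⊆ Ω ∧
      (∀ x, 0 ≤ φ x ∧ φ x ≤ 1) ∧ ∀ x ∈ K, φ x = 1 := by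
  obtain ⟨V, hV, hKV, hVΩ, hVc⟩ := exists_open_between_and_isCompact_closure hK hΩ hKΩ
  obtain ⟨φ, hφ, hr, hs, h1⟩ := exists_contMDiff_support_eq_eq_one_iff
    (modelWithCornersSelf ℝ (Fin d → ℝ)) (n := (⊤ : ℕ∞)) hV hK.isClosed hKV
  have ht : tsupport φ = closure V := by rw [tsupport, hs]
  refine ⟨φ, hφ.contDiff, ?_, ?_, ?_, fun x hx => (h1 x).1 hx⟩
  · rw [HasCompactSupport, ht]; exact hVc
  · rw [ht]; exact hVΩ
  · intro x
    exact hr ⟨x, rfl⟩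

open Real in
lemma periodic_shift (g : ℝ → ℝ) (hg : Function.Periodic g (2 * π)) (c : ℝ) :
    ∫ t in (-π)..π, g (c + t) = ∫ t in (-π)..π, g t := by
  rw [intervalIntegral.integral_comp_add_left g]
  have h2 := hg.intervalIntegral_add_eq (c + -π) (-π)
  have e1 : c + π = c + -π + 2 * π := by ring
  have e2 : -π + 2 * π = π := by ring
  rw [e1, h2, e2]

open Real in
set_option maxHeartbeats 1600000 in
lemma avg_upper {d : ℕ}
    (Ω : Set (Fin d → ℝ)) (hΩopen : IsOpen Ω)
    (hΩbdd : Bornology.IsBounded Ω)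
    (F a₀ a₁ : Matrix (Fin d) (Fin d) ℝ) (B : ℝ)
    (hB : ∀ v : (Fin d → ℝ) → (Fin d → ℝ), ContDiff ℝ (⊤ : ℕ∞) v → HasCompactSupport v →
      tsupport v ⊆ Ω → B ≤ ∫ x in Ω,
            min (frob2 (F + symJacobian v x - a₀)) (frob2 (F + symJacobian v x - a₁)))
    (ξ p : Fin d → ℝ) (u : ℝ → ℝ) (hu : ContDiff ℝ (⊤ : ℕ∞) u)
    (hup : Function.Periodic u (2 * π)) (hu0 : ∫ t in (-π)..π, u t = 0) (hu1 : ∀ t, |u t| ≤ 1)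
    (P : Matrix (Fin d) (Fin d) ℝ) (hP : ∀ i j, P i j = p i * ξ j + p j * ξ i) :
    2 * π * B ≤ (volume Ω).toReal *
      ∫ t in (-π)..π, min (frob2 (F + u t • P - a₀)) (frob2 (F + u t • P - a₁)) := by
  have hpi := Real.pi_pos
  have hΩfin : volume Ω ≠ ⊤ := hΩbdd.measure_lt_top.ne
  obtain ⟨w, hw, hwd, W, hW⟩ := primitive_exists u hu hup hu0
  have hW0 : 0 ≤ W := (abs_nonneg _).trans (hW 0)
  set ψ : ℝ → ℝ := fun s => min (frob2 (F + s • P - a₀)) (frob2 (F + s • P - a₁)) with hψ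
  have hfn : ∀ A : Matrix (Fin d) (Fin d) ℝ, 0 ≤ frob2 A := fun A => by
    unfold frob2; positivity
  have hfc : Continuous (frob2 (d := d)) := by
    unfold frob2
    refine continuous_finsetSum _ fun i _ => continuous_finsetSum _ fun j _ => ?_
    exact (continuous_id.matrix_elem i j).pow 2
  set Ψ := ∫ t in (-π)..π, ψ (u t) with hΨ
  have hΨ0 : 0 ≤ Ψ := intervalIntegral.integral_nonneg (by linarith)
    fun t _ => le_min (hfn _) (hfn _)
  set C : ℝ := ∑ i, ∑ j, (|F i j - a₀ i j| + |P i j| + |p i| + |p j|) ^ 2 with hC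
  have hC0 : 0 ≤ C := by positivity
  refine le_of_forall_pos_le_add fun ε' hε' => ?_
  obtain ⟨K, hKΩ, hK, hKε⟩ := hΩopen.measurableSet.exists_isCompact_sdiff_lt hΩfin
    (ε := ENNReal.ofReal (ε' / (2 * π * C + 1)))
    (by have : 0 < ε' / (2 * π * C + 1) := by positivity
        simpa using this)
  obtain ⟨φ, hφ, hφc, hφΩ, hφ01, hφK⟩ := cutoff_exists Ω K hΩopen hK hKΩ
  have hφ' : Continuous (fderiv ℝ φ) := hφ.continuous_fderiv (by simp)
  obtain ⟨G, hG⟩ := (hφc.fderiv ℝ).exists_bound_of_continuous hφ'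
  have hG0 : 0 ≤ G := (norm_nonneg _).trans (hG 0)
  have hGj : ∀ x (j : Fin d), |fderiv ℝ φ x (Pi.single j 1)| ≤ G := by
    intro x j
    have := (fderiv ℝ φ x).le_opNorm (Pi.single j 1)
    rw [Real.norm_eq_abs] at this
    refine this.trans ?_
    have h1 : ‖(Pi.single j 1 : Fin d → ℝ)‖ = 1 := by
      rw [Pi.norm_single]; simp
    rw [h1, mul_one]; exact hG x
  set n : ℝ := W * G + 1 with hn
  have hn0 : 0 < n := by positivity
  have hnb : ∀ t x (j : Fin d), |n⁻¹ * w t * fderiv ℝ φ x (Pi.single j 1)| ≤ 1 := by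
    intro t x j
    rw [abs_mul, abs_mul, abs_of_pos (inv_pos.2 hn0)]
    calc n⁻¹ * |w t| * |fderiv ℝ φ x (Pi.single j 1)| ≤ n⁻¹ * W * G := by
          gcongr
          · exact hW t
          · exact hGj x j
      _ = n⁻¹ * (W * G) := by ring
      _ ≤ n⁻¹ * n := by gcongr; linarith
      _ = 1 := inv_mul_cancel₀ hn0.ne'
  set v : ℝ → (Fin d → ℝ) → (Fin d → ℝ) := fun t => lamField φ w n ξ p t with hv
  set z : (Fin d → ℝ) → ℝ → ℝ := fun x t => n * (∑ i, ξ i * x i) + t with hz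
  have hsj : ∀ t x i j, symJacobian (v t) x i j =
      φ x * u (z x t) * P i j + (n⁻¹ * w (z x t)) *
        (fderiv ℝ φ x (Pi.single j 1) * p i + fderiv ℝ φ x (Pi.single i 1) * p j) := by
    intro t x i j
    rw [hP]; exact lamField_symJacobian φ hφ w u hwd n hn0 ξ p t x i j
  have hsup : ∀ t, tsupport (v t) ⊆ tsupport φ := by
    intro t
    refine closure_mono fun x hx => ?_
    intro h
    apply hx
    simp [hv, lamField, h]
  have hvB : ∀ t, B ≤ ∫ x in Ω,
      min (frob2 (F + symJacobian (v t) x - a₀)) (frob2 (F + symJacobian (v t) x - a₁)) := fun t =>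
    hB (v t) (lamField_contDiff φ hφ w hw n ξ p t)
      (hφc.of_isClosed_subset (isClosed_tsupport _) (hsup t)) ((hsup t).trans hφΩ)
  set E : (Fin d → ℝ) → ℝ → ℝ := fun x t =>
    min (frob2 (F + symJacobian (v t) x - a₀)) (frob2 (F + symJacobian (v t) x - a₁)) with hE
  have hE0 : ∀ x t, 0 ≤ E x t := fun x t => le_min (hfn _) (hfn _)
  have hEC : ∀ x t, E x t ≤ C := by
    intro x t
    refine (min_le_left _ _).trans ?_
    unfold frob2
    refine Finset.sum_le_sum fun i _ => Finset.sum_le_sum fun j _ => ?_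
    rw [← sq_abs]
    refine pow_le_pow_left₀ (abs_nonneg _) ?_ 2
    have e1 : (F + symJacobian (v t) x - a₀) i j = (F i j - a₀ i j) + φ x * u (z x t) * P i j
        + n⁻¹ * w (z x t) * fderiv ℝ φ x (Pi.single j 1) * p i
        + n⁻¹ * w (z x t) * fderiv ℝ φ x (Pi.single i 1) * p j := by
      rw [Matrix.sub_apply, Matrix.add_apply, hsj]; ring
    rw [e1]
    refine (abs_add_le _ _).trans (add_le_add ((abs_add_le _ _).trans
      (add_le_add ((abs_add_le _ _).trans (add_le_add le_rfl ?_)) ?_)) ?_)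
    · rw [abs_mul]
      refine mul_le_of_le_one_left (abs_nonneg _) ?_
      rw [abs_mul, abs_of_nonneg (hφ01 x).1]
      exact mul_le_one₀ (hφ01 x).2 (abs_nonneg _) (hu1 _)
    · rw [abs_mul]
      exact mul_le_of_le_one_left (abs_nonneg _) (hnb _ _ _)
    · rw [abs_mul]
      exact mul_le_of_le_one_left (abs_nonneg _) (hnb _ _ _)
  have hEK : ∀ x ∈ K, ∀ t, E x t = ψ (u (z x t)) := by
    intro x hx t
    have hd0 : fderiv ℝ φ x = 0 := by
      refine IsLocalMax.fderiv_eq_zero (Filter.Eventually.of_forall fun y => ?_)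
      rw [hφK x hx]; exact (hφ01 y).2
    have : symJacobian (v t) x = u (z x t) • P := by
      ext i j
      rw [hsj, hd0, hφK x hx]; simp
    simp only [hE, hψ, this]
  have hEcont : Continuous (Function.uncurry E) := by
    have hzc : Continuous fun q : (Fin d → ℝ) × ℝ => z q.1 q.2 := by
      simp only [hz]; fun_prop
    have hfd : ∀ j : Fin d, Continuous fun q : (Fin d → ℝ) × ℝ =>
        fderiv ℝ φ q.1 (Pi.single j 1) := fun j =>
      (hφ'.comp continuous_fst).clm_apply continuous_const
    have hs : Continuous fun q : (Fin d → ℝ) × ℝ => symJacobian (v q.2) q.1 := by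
      refine continuous_matrix fun i j => ?_
      simp only [hsj]
      have c1 := hu.continuous.comp hzc
      have c2 := hw.continuous.comp hzc
      have c3 := hφ.continuous.comp (continuous_fst (X := Fin d → ℝ) (Y := ℝ))
      exact ((c3.mul c1).mul continuous_const).add ((continuous_const.mul c2).mul
        (((hfd j).mul continuous_const).add ((hfd i).mul continuous_const)))
    exact (hfc.comp ((continuous_const.add hs).sub continuous_const)).min
      (hfc.comp ((continuous_const.add hs).sub continuous_const))
  have hvB' : ∀ t, B ≤ ∫ x in Ω, E x t := hvB
  clear_value E
  set I : Set ℝ := Set.Ioc (-π) π with hI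
  have hIvol : (volume I).toReal = 2 * π := by
    rw [hI, Real.volume_Ioc, ENNReal.toReal_ofReal (by linarith)]; ring
  have hIfin : volume I ≠ ⊤ := by rw [hI, Real.volume_Ioc]; simp
  have : IsFiniteMeasure (volume.restrict Ω) := ⟨by simpa using hΩfin.lt_top⟩
  have : IsFiniteMeasure (volume.restrict I) := ⟨by simpa using hIfin.lt_top⟩
  have hint : Integrable (Function.uncurry E) ((volume.restrict Ω).prod (volume.restrict I)) := by
    refine Integrable.of_bound hEcont.aestronglyMeasurable C (Filter.Eventually.of_forall ?_)
    rintro ⟨x, t⟩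
    rw [Real.norm_eq_abs, Function.uncurry_apply_pair, abs_of_nonneg (hE0 x t)]
    exact hEC x t
  have hswap := integral_integral_swap hint
  have hlow : 2 * π * B ≤ ∫ t in I, ∫ x in Ω, E x t := by
    have := setIntegral_mono_on (μ := volume) (s := I) (f := fun _ => B)
      (g := fun t => ∫ x in Ω, E x t) (integrableOn_const hIfin)
      hint.swap.integral_prod_left measurableSet_Ioc (fun t _ => hvB' t)
    rwa [setIntegral_const, Measure.real, hIvol, smul_eq_mul] at this
  have hJK : ∀ x ∈ K, ∫ t in I, E x t = Ψ := by
    intro x hx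
    simp only [hEK x hx]
    rw [hI, ← intervalIntegral.integral_of_le (by linarith)]
    simp only [hz]
    have hper : Function.Periodic (fun s => ψ (u s)) (2 * π) := fun s => by simp only [hup s]
    exact periodic_shift (fun s => ψ (u s)) hper _
  have hJC : ∀ x, ∫ t in I, E x t ≤ 2 * π * C := by
    intro x
    have hc : Continuous (E x) := Continuous.uncurry_left x hEcont
    have := setIntegral_mono_on (μ := volume) (s := I) (f := E x)
      (g := fun _ => C)
      (Integrable.of_bound hc.aestronglyMeasurable C (Filter.Eventually.of_forall fun t => by
        rw [Real.norm_eq_abs, abs_of_nonneg (hE0 x t)]; exact hEC x t))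
      (integrableOn_const hIfin) measurableSet_Ioc (fun t _ => hEC x t)
    rwa [setIntegral_const, Measure.real, hIvol, smul_eq_mul] at this
  have hKm : MeasurableSet K := hK.isClosed.measurableSet
  have hind : Integrable (Kᶜ.indicator (fun _ => 2 * π * C)) (volume.restrict Ω) :=
    (integrable_const _).indicator hKm.compl
  have hup' : ∫ x in Ω, ∫ t in I, E x t ≤
      ∫ x in Ω, (Ψ + Kᶜ.indicator (fun _ => 2 * π * C) x) := by
    refine integral_mono hint.integral_prod_left ((integrable_const _).add hind) fun x => ?_
    by_cases hx : x ∈ K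
    · simp [hx, hJK x hx]
    · have := hJC x
      simp only [Set.indicator_of_mem (Set.mem_compl hx)]
      linarith
  have hval : ∫ x in Ω, (Ψ + Kᶜ.indicator (fun _ => 2 * π * C) x) =
      (volume Ω).toReal * Ψ + (volume (Ω \ K)).toReal * (2 * π * C) := by
    rw [integral_add (integrable_const _) hind, setIntegral_const,
      setIntegral_indicator hKm.compl, setIntegral_const]
    simp [Measure.real, Set.diff_eq]
  have hsmall : (volume (Ω \ K)).toReal * (2 * π * C) ≤ ε' := by
    have h1 : (volume (Ω \ K)).toReal ≤ ε' / (2 * π * C + 1) :=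
      ENNReal.toReal_le_of_le_ofReal (by positivity) hKε.le
    calc (volume (Ω \ K)).toReal * (2 * π * C) ≤ ε' / (2 * π * C + 1) * (2 * π * C + 1) := by
          gcongr; linarith
      _ = ε' := by field_simp
  rw [← hswap] at hlow
  linarith

lemma lam_split {d : ℕ} (F a₀ a₁ P : Matrix (Fin d) (Fin d) ℝ) (θ : ℝ) :
    θ * frob2 (F + (1 - θ) • P - a₁) + (1 - θ) * frob2 (F + (-θ) • P - a₀) =
      frob2 (F - ((1 - θ) • a₀ + θ • a₁))
        + θ * (1 - θ) * ∑ i, ∑ j, (P i j - (a₁ - a₀) i j) ^ 2 := by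
  unfold frob2
  simp only [Finset.mul_sum, ← Finset.sum_add_distrib]
  refine Finset.sum_congr rfl fun i _ => Finset.sum_congr rfl fun j _ => ?_
  simp only [Matrix.add_apply, Matrix.sub_apply, Matrix.smul_apply, smul_eq_mul]
  ring

lemma frob2_nonneg {d : ℕ} (A : Matrix (Fin d) (Fin d) ℝ) : 0 ≤ frob2 A := by
  unfold frob2; positivity

lemma frob2_continuous {d : ℕ} : Continuous (frob2 (d := d)) := by
  unfold frob2
  refine continuous_finsetSum _ fun i _ => continuous_finsetSum _ fun j _ => ?_
  exact (continuous_id.matrix_elem i j).pow 2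

/-- Relaxation formula for the geometrically linear (symmetrized gradient) two-well energy. -/
theorem statement1
    (d : ℕ) (hd : 2 ≤ d)
    (Ω : Set (Fin d → ℝ)) (hΩopen : IsOpen Ω) (hΩne : Ω.Nonempty)
    (hΩbdd : Bornology.IsBounded Ω)
    (F a₀ a₁ : Matrix (Fin d) (Fin d) ℝ)
    (hF : F.IsSymm) (ha₀ : a₀.IsSymm) (ha₁ : a₁.IsSymm) (hwells : a₀ ≠ a₁) :
    ∃ H M : ℝ,
      -- `H = min_{ξ ∈ S^{d-1}} (‖a‖² - 2‖aξ‖² + ⟨aξ,ξ⟩²)`, attained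
      IsLeast {h : ℝ | ∃ ξ : Fin d → ℝ, (∑ i, ξ i ^ 2) = 1 ∧
        h = frob2 (a₁ - a₀) - 2 * (∑ i, ((a₁ - a₀).mulVec ξ i) ^ 2)
            + (∑ i, (a₁ - a₀).mulVec ξ i * ξ i) ^ 2} H ∧
      -- `M = min_{θ ∈ [0,1]} (‖F - a_θ‖² + θ(1-θ) H)`, attained
      IsLeast {m : ℝ | ∃ θ ∈ Set.Icc (0 : ℝ) 1,
        m = frob2 (F - ((1 - θ) • a₀ + θ • a₁)) + θ * (1 - θ) * H} M ∧
      -- the infimum of the elastic energy over test fields equals `|Ω| * M`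
      sInf {e : ℝ | ∃ v : (Fin d → ℝ) → (Fin d → ℝ),
          ContDiff ℝ (⊤ : ℕ∞) v ∧ HasCompactSupport v ∧ tsupport v ⊆ Ω ∧
          e = ∫ x in Ω,
            min (frob2 (F + symJacobian v x - a₀)) (frob2 (F + symJacobian v x - a₁))}
        = (volume Ω).toReal * M := by
  obtain ⟨ξ, hξ, hmin⟩ := hForm_isLeast hd (a₁ - a₀)
  have hac : (a₁ - a₀).IsSymm := ha₁.sub ha₀
  set H := hForm (a₁ - a₀) ξ with hH
  set f : ℝ → ℝ := fun θ => frob2 (F - ((1 - θ) • a₀ + θ • a₁)) + θ * (1 - θ) * H with hf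
  have hfc : Continuous f := by
    have : Continuous fun θ : ℝ => frob2 (F - ((1 - θ) • a₀ + θ • a₁)) :=
      frob2_continuous.comp (by fun_prop)
    exact this.add (by fun_prop)
  obtain ⟨θ, hθ, hθmin⟩ := isCompact_Icc.exists_isMinOn
    (Set.nonempty_Icc.2 (zero_le_one (α := ℝ))) hfc.continuousOn
  have hM : ∀ η ∈ Set.Icc (0 : ℝ) 1, f θ ≤ f η := fun η hη => hθmin hη
  refine ⟨H, f θ, ⟨⟨ξ, hξ, rfl⟩, ?_⟩, ⟨⟨θ, hθ, rfl⟩, ?_⟩, ?_⟩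
  · rintro h ⟨η, hη, rfl⟩
    exact hmin η hη
  · rintro m ⟨η, hη, rfl⟩
    exact hM η hη
  apply le_antisymm
  · set S := {e : ℝ | ∃ v : (Fin d → ℝ) → (Fin d → ℝ),
          ContDiff ℝ (⊤ : ℕ∞) v ∧ HasCompactSupport v ∧ tsupport v ⊆ Ω ∧
          e = ∫ x in Ω,
            min (frob2 (F + symJacobian v x - a₀)) (frob2 (F + symJacobian v x - a₁))} with hS
    have hbdd : BddBelow S := by
      refine ⟨0, ?_⟩
      rintro e ⟨v, -, -, -, rfl⟩
      exact integral_nonneg fun x => le_min (frob2_nonneg _) (frob2_nonneg _)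
    have hB : ∀ v : (Fin d → ℝ) → (Fin d → ℝ), ContDiff ℝ (⊤ : ℕ∞) v → HasCompactSupport v →
      tsupport v ⊆ Ω → sInf S ≤ ∫ x in Ω,
            min (frob2 (F + symJacobian v x - a₀)) (frob2 (F + symJacobian v x - a₁)) :=
      fun v h1 h2 h3 => csInf_le hbdd ⟨v, h1, h2, h3, rfl⟩
    obtain ⟨u, hu, hlim⟩ := profile_exists θ hθ
    set p := optP (a₁ - a₀) ξ with hp
    set P : Matrix (Fin d) (Fin d) ℝ := Matrix.of fun i j => p i * ξ j + p j * ξ i with hPdef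
    have hP : ∀ i j, P i j = p i * ξ j + p j * ξ i := fun i j => rfl
    set ψ : ℝ → ℝ := fun s => min (frob2 (F + s • P - a₀)) (frob2 (F + s • P - a₁)) with hψ
    have hψc : Continuous ψ :=
      (frob2_continuous.comp (by fun_prop)).min (frob2_continuous.comp (by fun_prop))
    have hle := ge_of_tendsto' ((hlim ψ hψc).const_mul (volume Ω).toReal) fun k =>
      avg_upper Ω hΩopen hΩbdd F a₀ a₁ (sInf S) hB ξ p (u k) (hu k).1 (hu k).2.1 (hu k).2.2.1
        (hu k).2.2.2 P hP
    have h1 : θ * ψ (1 - θ) + (1 - θ) * ψ (-θ) ≤ f θ := by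
      have e := lam_split F a₀ a₁ P θ
      have e2 : ∑ i, ∑ j, (P i j - (a₁ - a₀) i j) ^ 2 = H := rankone_opt (a₁ - a₀) hac ξ hξ
      rw [e2] at e
      rw [hf]
      simp only
      rw [← e]
      exact add_le_add (mul_le_mul_of_nonneg_left (min_le_right _ _) hθ.1)
        (mul_le_mul_of_nonneg_left (min_le_left _ _) (by linarith [hθ.2]))
    have hpi := Real.pi_pos
    have h2 : (volume Ω).toReal * (θ * ψ (1 - θ) + (1 - θ) * ψ (-θ)) ≤ (volume Ω).toReal * f θ :=
      mul_le_mul_of_nonneg_left h1 ENNReal.toReal_nonneg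
    refine le_of_mul_le_mul_left ?_ (show 0 < 2 * Real.pi by positivity)
    calc _ ≤ _ := hle
      _ = 2 * Real.pi * ((volume Ω).toReal * (θ * ψ (1 - θ) + (1 - θ) * ψ (-θ))) := by ring
      _ ≤ _ := mul_le_mul_of_nonneg_left h2 (by positivity)
  · refine le_csInf ?_ ?_
    · refine ⟨_, 0, contDiff_const, HasCompactSupport.zero, ?_, rfl⟩
      simp [tsupport]
    · rintro e ⟨v, hv, hvc, hvΩ, rfl⟩
      exact energy_lower hd Ω hΩopen hΩne hΩbdd F a₀ a₁ hac H (f θ) hmin hM v hv hvc hvΩ
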